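/- Let F be a finite field of characteristic p, q = p^f with f ≥ 1, let h be an integer with 0 ≤ h ≤ q-2, and let λ ∈ F^×. Let m, n ≥ -1 and t ≥ 0 be integers with m < t and n < t, and let a_0,...,a_m, b_0,...,b_n, c_0,...,c_t ∈ F be such that a_m ≠ 0 if m ≥ 0, b_n ≠ 0 if n ≥ 0, c_t ≠ 0, and t does not lie in h + qℤ. Set y = Σ_{i=0}^{m} a_i·T^{-(q-1)(h+qh+q²i)} + Σ_{j=0}^{n} b_j·T^{-(q-1)(h+qj)} + Σ_{k=0}^{t} c_k·T^{-(q-1)k} ∈ F((T)) (empty sums when m or n equals -1). Then there is no Laurent series x ∈ F((T)), supported on exponents divisible by q-1, satisfying x - λ·T^{-(q-1)h}·φ_q(x) = y. -/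

import Mathlib

/-!
Comparing coefficients, a solution `x` of `x - λ T^c x(T^q) = y` satisfies
`x_{c + qe} = y_{c + qe} + λ x_e`, and `x_n = y_n` when `n ∉ c + qℤ`. Along an orbit of
`e ↦ c + qe` that starts outside `c + qℤ`, goes to `-∞` and meets the support of `y` only in its
starting point `e`, this forces `x_{e_r} = λ^r y_e ≠ 0` at every point `e_r`, so `x` has
infinitely many negative exponents.

For `c = -(q-1)h` and exponents `-(q-1)k`, the map becomes `σ k = h + qk`, and the exponents of the
three sums are given by `σ² i`, `σ j` and `k` with `i, j < t` and `k ≤ t`. As `t ∉ σ(ℤ)` and `σ`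
is injective and increases along the orbit of `t`, only the term `k = t` lies on that orbit. Since
`q - 1` is prime to `q`, the exponent `-(q-1)t` lies outside `-(q-1)h + qℤ`, as required of `e`.
-/

open Function

theorem iterate_ne_iterate_of_lt {α : Type*} [Preorder α] {f : α → α} (hf : Injective f)
    {x y : α} (hx : x ∉ Set.range f) (hle : ∀ n, x ≤ f^[n] x) (hyx : y < x) (m n : ℕ) :
    f^[m] y ≠ f^[n] x := by
  intro heq
  obtain hmn | hnm := le_or_gt m n
  · obtain ⟨k, rfl⟩ := Nat.exists_eq_add_of_le hmn
    rw [iterate_add_apply] at heq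
    exact (hle k).not_gt (hf.iterate m heq ▸ hyx)
  · obtain ⟨k, rfl⟩ := Nat.exists_eq_add_of_lt hnm
    rw [add_assoc, iterate_add_apply, iterate_succ_apply'] at heq
    exact hx ⟨_, hf.iterate n heq⟩

theorem exists_coeff_iterate_eq_zero {R : Type*} [Zero R] (x : LaurentSeries R)
    {f : ℤ → ℤ} (hf : StrictMono f) {e : ℤ} (he : f e < e) : ∃ r, x.coeff (f^[r] e) = 0 := by
  by_contra! hne
  exact (hf.strictAnti_iterate_of_map_lt he).not_bddBelow_range_of_isPredArchimedean
    ⟨x.order, Set.forall_mem_range.2 fun r ↦ HahnSeries.order_le_of_coeff_ne_zero (hne r)⟩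

/-- The action on exponents of the twisted substitution `x ↦ T^c x(T^q)`, which sends `T^e` to
`T^(c + qe)`. -/
def twistExponent (c q e : ℤ) : ℤ := c + q * e

theorem twistExponent_strictMono (c : ℤ) {q : ℤ} (hq : 0 < q) : StrictMono (twistExponent c q) :=
  fun _ _ hlt ↦ add_lt_add_right (mul_lt_mul_of_pos_left hlt hq) c

theorem mem_range_twistExponent {c q n : ℤ} : n ∈ Set.range (twistExponent c q) ↔ q ∣ n - c :=
  exists_congr fun _ ↦ by rw [twistExponent, sub_eq_iff_eq_add', eq_comm]

theorem twistExponent_semiconj (u c q : ℤ) :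
    Semiconj (u * ·) (twistExponent c q) (twistExponent (u * c) q) := fun k ↦ by
  simp only [twistExponent]
  ring

theorem mem_range_twistExponent_of_mul {u c q n : ℤ} (hqu : IsCoprime q u)
    (hn : u * n ∈ Set.range (twistExponent (u * c) q)) : n ∈ Set.range (twistExponent c q) := by
  rw [mem_range_twistExponent, ← mul_sub] at hn
  exact mem_range_twistExponent.2 (hqu.dvd_of_dvd_mul_left hn)

theorem lt_twistExponent {c q e : ℤ} (hc : 0 ≤ c) (hq : 0 < q) (he : 0 ≤ e)
    (he' : e ∉ Set.range (twistExponent c q)) : e < twistExponent c q e := by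
  refine lt_of_le_of_ne ?_ fun heq ↦ he' ⟨e, heq.symm⟩
  exact (le_mul_of_one_le_left he hq).trans (le_add_of_nonneg_left hc)

section TwistedEquation

variable {R : Type*} [Ring R] {c q : ℤ} {lam : R} {x z y : LaurentSeries R}

theorem coeff_eq_of_notMem_range_twistExponent (hz : ∀ n, ¬ q ∣ n → z.coeff n = 0)
    (hxy : x - lam • (HahnSeries.single c 1 * z) = y) {n : ℤ}
    (hn : n ∉ Set.range (twistExponent c q)) : x.coeff n = y.coeff n := by
  rw [mem_range_twistExponent] at hn
  simp [← hxy, HahnSeries.coeff_single_mul, hz _ hn]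

theorem coeff_twistExponent (hz : ∀ n, z.coeff (q * n) = x.coeff n)
    (hxy : x - lam • (HahnSeries.single c 1 * z) = y) (e : ℤ) :
    x.coeff (twistExponent c q e) = y.coeff (twistExponent c q e) + lam * x.coeff e := by
  simp [← hxy, HahnSeries.coeff_single_mul, twistExponent, hz]

theorem coeff_iterate_twistExponent (hz : ∀ n, z.coeff (q * n) = x.coeff n)
    (hxy : x - lam • (HahnSeries.single c 1 * z) = y) {e : ℤ}
    (hy : ∀ r, y.coeff ((twistExponent c q)^[r + 1] e) = 0) (r : ℕ) :
    x.coeff ((twistExponent c q)^[r] e) = lam ^ r * x.coeff e := by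
  induction r with
  | zero => simp
  | succ r ih =>
    have hyr := hy r
    rw [iterate_succ_apply'] at hyr ⊢
    rw [coeff_twistExponent hz hxy, hyr, zero_add, ih, pow_succ', mul_assoc]

theorem sub_smul_single_mul_ne_of_coeff_iterate (hq : 0 < q) (hlam : IsLeftRegular lam)
    (hz : ∀ n, z.coeff (q * n) = x.coeff n) (hz' : ∀ n, ¬ q ∣ n → z.coeff n = 0) {e : ℤ}
    (he : e ∉ Set.range (twistExponent c q)) (hlt : twistExponent c q e < e)
    (hye : y.coeff e ≠ 0) (hy : ∀ r, y.coeff ((twistExponent c q)^[r + 1] e) = 0) :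
    x - lam • (HahnSeries.single c 1 * z) ≠ y := by
  intro hxy
  obtain ⟨r, hr⟩ := exists_coeff_iterate_eq_zero x (twistExponent_strictMono c hq) hlt
  rw [coeff_iterate_twistExponent hz hxy hy,
    coeff_eq_of_notMem_range_twistExponent hz' hxy he] at hr
  exact hye (hlam.pow r (hr.trans (mul_zero _).symm))

end TwistedEquation

theorem coeff_sum_single_iterate_eq_zero {R : Type*} [AddCommMonoid R] {u : ℤ} (hu : u ≠ 0)
    {f : ℤ → ℤ} (hf : Injective f) {t N : ℕ} (ht : (t : ℤ) ∉ Set.range f)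
    (hle : ∀ n, (t : ℤ) ≤ f^[n] t) (hN : N ≤ t) (a : ℕ → R) (m n : ℕ) :
    (∑ i ∈ Finset.range N, HahnSeries.single (u * f^[m] i) (a i)).coeff (u * f^[n] t) = 0 := by
  rw [HahnSeries.coeff_sum]
  refine Finset.sum_eq_zero fun i hi ↦ HahnSeries.coeff_single_of_ne ?_
  have hit : (i : ℤ) < t := by exact_mod_cast (Finset.mem_range.1 hi).trans_le hN
  exact fun heq ↦ iterate_ne_iterate_of_lt hf ht hle hit m n (mul_left_cancel₀ hu heq).symm

theorem coeff_sums_single_iterate {R : Type*} [AddCommMonoid R] {u : ℤ} (hu : u ≠ 0)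
    {f : ℤ → ℤ} (hf : Injective f) {M N t : ℕ} (ht : (t : ℤ) ∉ Set.range f)
    (hle : ∀ n, (t : ℤ) ≤ f^[n] t) (hM : M ≤ t) (hN : N ≤ t) (a b c : ℕ → R) (r : ℕ) :
    ((∑ i ∈ Finset.range M, HahnSeries.single (u * f (f i)) (a i))
      + (∑ j ∈ Finset.range N, HahnSeries.single (u * f j) (b j))
      + ∑ k ∈ Finset.range (t + 1), HahnSeries.single (u * k) (c k)).coeff (u * f^[r] t)
      = (HahnSeries.single (u * t) (c t)).coeff (u * f^[r] t) := by
  have ha := coeff_sum_single_iterate_eq_zero hu hf ht hle hM a 2 r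
  have hb := coeff_sum_single_iterate_eq_zero hu hf ht hle hN b 1 r
  have hc := coeff_sum_single_iterate_eq_zero hu hf ht hle le_rfl c 0 r
  simp only [iterate_succ, iterate_zero, comp_apply, id_eq] at ha hb hc
  rw [Finset.sum_range_succ, HahnSeries.coeff_add, HahnSeries.coeff_add, HahnSeries.coeff_add,
    ha, hb, hc, zero_add, zero_add, zero_add]

theorem sub_smul_single_mul_ne_sums_single {R : Type*} [Ring R] {q u h : ℤ} (hq : 0 < q)
    (hu : u < 0) (hqu : IsCoprime q u) (hh : 0 ≤ h) {lam : R} (hlam : IsLeftRegular lam)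
    {x z : LaurentSeries R} (hz : ∀ n, z.coeff (q * n) = x.coeff n)
    (hz' : ∀ n, ¬ q ∣ n → z.coeff n = 0) {M N t : ℕ} {a b c : ℕ → R} (hc : c t ≠ 0)
    (hMt : M ≤ t) (hNt : N ≤ t) (ht : (t : ℤ) ∉ Set.range (twistExponent h q)) :
    x - lam • (HahnSeries.single (u * h) 1 * z)
      ≠ (∑ i ∈ Finset.range M,
            HahnSeries.single (u * twistExponent h q (twistExponent h q i)) (a i))
          + (∑ j ∈ Finset.range N, HahnSeries.single (u * twistExponent h q j) (b j))
          + ∑ k ∈ Finset.range (t + 1), HahnSeries.single (u * k) (c k) := by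
  have hmono := twistExponent_strictMono h hq
  have hlt := lt_twistExponent hh hq (Int.natCast_nonneg t) ht
  have hmono_orbit := hmono.strictMono_iterate_of_lt_map hlt
  have horbit (r : ℕ) : (twistExponent (u * h) q)^[r] (u * t) = u * (twistExponent h q)^[r] t :=
    ((twistExponent_semiconj u h q).iterate_right r t).symm
  have hcoeff := coeff_sums_single_iterate hu.ne hmono.injective ht
    (fun n ↦ hmono_orbit.monotone n.zero_le) hMt hNt a b c
  refine sub_smul_single_mul_ne_of_coeff_iterate hq hlam hz hz' (e := u * t)
    (mt (mem_range_twistExponent_of_mul hqu) ht) ?_ ?_ fun r ↦ ?_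
  · exact (horbit 1).trans_lt (mul_lt_mul_of_neg_left hlt hu)
  · exact (hcoeff 0).trans_ne (HahnSeries.coeff_single_same (u * t : ℤ) (c t) |>.trans_ne hc)
  · rw [horbit, hcoeff]
    exact HahnSeries.coeff_single_of_ne
      ((mul_right_injective₀ hu.ne).ne (hmono_orbit r.succ_pos).ne')

theorem statement11_general {R : Type*} [Ring R] {q w h : ℤ} (hq : 0 < q) (hw : 0 < w)
    (hqw : IsCoprime q w) (hh : 0 ≤ h) {φ : LaurentSeries R → LaurentSeries R}
    (hφ : ∀ (x : LaurentSeries R) (n : ℤ), (φ x).coeff (q * n) = x.coeff n)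
    (hφ' : ∀ (x : LaurentSeries R) (n : ℤ), ¬ q ∣ n → (φ x).coeff n = 0)
    {lam : R} (hlam : IsLeftRegular lam) {M N t : ℕ} {a b c : ℕ → R} (hc : c t ≠ 0)
    (hMt : M ≤ t) (hNt : N ≤ t) (ht : ∀ k : ℤ, (t : ℤ) ≠ h + q * k) (x : LaurentSeries R) :
    x - lam • (HahnSeries.single (-(w * h)) (1 : R) * φ x)
      ≠ (∑ i ∈ Finset.range M, HahnSeries.single (-(w * (h + q * h + q ^ 2 * i))) (a i))
          + (∑ j ∈ Finset.range N, HahnSeries.single (-(w * (h + q * j))) (b j))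
          + (∑ k ∈ Finset.range (t + 1), HahnSeries.single (-(w * k)) (c k)) := by
  have hsq (i : ℤ) : h + q * h + q ^ 2 * i = twistExponent h q (twistExponent h q i) := by
    simp only [twistExponent]
    ring
  simp only [← neg_mul, hsq]
  exact sub_smul_single_mul_ne_sums_single hq (neg_neg_of_pos hw) hqw.neg_right hh hlam (hφ x)
    (hφ' x) hc hMt hNt fun ⟨k, hk⟩ ↦ ht k hk.symm

/-- With `y = Σ_{i=0}^{m} a_i T^{-(q-1)(h+qh+q²i)} + Σ_{j=0}^{n} b_j T^{-(q-1)(h+qj)}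
+ Σ_{k=0}^{t} c_k T^{-(q-1)k}` where `m, n < t`, `a_m, b_n, c_t ≠ 0` and `t ∉ h + qℤ`,
the equation `x - λ·T^{-(q-1)h}·φ_q(x) = y` has no solution among Laurent series supported
on multiples of `q-1`.  We encode `m, n ≥ -1` by naturals `M = m+1`, `N = n+1` (so
`m < t ↔ M ≤ t`, and `a_m ≠ 0` when `m ≥ 0` becomes `M ≥ 1 → a (M-1) ≠ 0`). -/
theorem statement11 (p f q : ℕ) (hp : p.Prime) (hf : 1 ≤ f) (hq : q = p ^ f)
    (F : Type) [Field F] [Fintype F] [CharP F p]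
    (φq : LaurentSeries F →ₗ[F] LaurentSeries F)
    (hφ1 : ∀ (x : LaurentSeries F) (n : ℤ), (φq x).coeff ((q : ℤ) * n) = x.coeff n)
    (hφ2 : ∀ (x : LaurentSeries F) (m : ℤ), ¬ (q : ℤ) ∣ m → (φq x).coeff m = 0)
    (h : ℕ) (hh : h ≤ q - 2) (lam : Fˣ)
    (M N t : ℕ) (a b c : ℕ → F)
    (ha : 1 ≤ M → a (M - 1) ≠ 0) (hb : 1 ≤ N → b (N - 1) ≠ 0) (hc : c t ≠ 0)
    (hMt : M ≤ t) (hNt : N ≤ t)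
    (ht : ∀ k : ℤ, (t : ℤ) ≠ (h : ℤ) + (q : ℤ) * k) :
    ¬ ∃ x : LaurentSeries F,
      (∀ n : ℤ, ¬ ((q : ℤ) - 1) ∣ n → x.coeff n = 0) ∧
      x - (lam : F) • (HahnSeries.single (-(((q : ℤ) - 1) * h)) (1 : F) * φq x)
        = (∑ i ∈ Finset.range M,
            HahnSeries.single (-(((q : ℤ) - 1) * ((h : ℤ) + q * h + q ^ 2 * i))) (a i))
          + (∑ j ∈ Finset.range N,
              HahnSeries.single (-(((q : ℤ) - 1) * ((h : ℤ) + q * j))) (b j))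
          + (∑ k ∈ Finset.range (t + 1),
              HahnSeries.single (-(((q : ℤ) - 1) * k)) (c k)) := by
  rintro ⟨x, -, hx⟩
  have hq1 : (1 : ℤ) < q := by exact_mod_cast hq ▸ Nat.one_lt_pow (by omega) hp.one_lt
  exact statement11_general (by omega) (by omega) ⟨1, -1, by ring⟩ (Int.natCast_nonneg h) hφ1 hφ2
    lam.isUnit.isRegular.left hc hMt hNt ht x hx
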